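/- (Journé's Lemma in higher parameters, with rectangles.) For each $d \ge 2$ and $0 < \epsilon < 1$ there is a constant $C_{d,\epsilon}$ with the following property. Let $\mathcal{U}$ be a collection of pairwise incomparable dyadic rectangles in $\mathbb{R}^d$ with shadow of finite measure, set $V = \{M\mathbf{1}_{\operatorname{sh}(\mathcal{U})} > \frac{1}{2d}\}$, and for $1 \le j \le d$ define $\operatorname{emb}_j(R) = \sup\{\mu \ge 1 : R_{(1)} \times \cdots \times (\mu R_{(j)}) \times \cdots \times R_{(d)} \subset V\}$. Then for every $\mathcal{U}' \subset \mathcal{U}$, $\sum_{R \in \mathcal{U}'} |R| \prod_{j=1}^{d-1} \operatorname{emb}_j(R)^{-\epsilon} \le C_{d,\epsilon} |\operatorname{sh}(\mathcal{U}')|$. -/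

import Mathlib

open MeasureTheory Set

noncomputable section

/-- The dyadic interval `[j2^k, (j+1)2^k)`. -/
def dI (j k : ℤ) : Set ℝ := Set.Ico ((j:ℝ) * 2 ^ k) (((j:ℝ) + 1) * 2 ^ k)

/-- A dyadic rectangle in `ℝ^d`, encoded by the data `(j_i, k_i)` of its side in each
coordinate. -/
abbrev RectD (d : ℕ) := Fin d → ℤ × ℤ

/-- The dyadic rectangle of `ℝ^d` associated to the data `R`. -/
def rectD {d : ℕ} (R : RectD d) : Set (Fin d → ℝ) :=
  Set.univ.pi fun i => dI (R i).1 (R i).2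

/-- The shadow `⋃_{R ∈ 𝓤} R` of a collection of dyadic rectangles in `ℝ^d`. -/
def shD {d : ℕ} (𝓤 : Set (RectD d)) : Set (Fin d → ℝ) := ⋃ R ∈ 𝓤, rectD R

/-- The concentric dilate by `μ` of the dyadic interval `[j2^k, (j+1)2^k)`. -/
def dilI (μ : ℝ) (j k : ℤ) : Set ℝ :=
  Set.Ico (((j:ℝ) + 1/2) * 2 ^ k - μ * 2 ^ k / 2) (((j:ℝ) + 1/2) * 2 ^ k + μ * 2 ^ k / 2)

/-- The dilate of `rectD R` by `μ` in the coordinate `jc` only. -/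
def rectDilj {d : ℕ} (jc : Fin d) (μ : ℝ) (R : RectD d) : Set (Fin d → ℝ) :=
  Set.univ.pi fun i => if i = jc then dilI μ (R i).1 (R i).2 else dI (R i).1 (R i).2

/-- The superlevel set `{M 1_S > t}` of the strong maximal function of an indicator in
`ℝ^d`. -/
def maxGTd {d : ℕ} (t : ENNReal) (S : Set (Fin d → ℝ)) : Set (Fin d → ℝ) :=
  {x | ∃ u v : Fin d → ℝ, x ∈ Set.univ.pi (fun i => Set.Ioo (u i) (v i)) ∧
    t * volume (Set.univ.pi fun i => Set.Ioo (u i) (v i))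
      < volume (S ∩ Set.univ.pi fun i => Set.Ioo (u i) (v i))}

/-- `emb_j(R)`: the supremum of those `μ ≥ 1` for which the dilate of `R` by `μ` in the `j`th
coordinate only is contained in `V = {M 1_{sh 𝓤} > 1/(2d)}`. -/
noncomputable def embj {d : ℕ} (𝓤 : Set (RectD d)) (jc : Fin d) (R : RectD d) : ℝ :=
  sSup {μ : ℝ | 1 ≤ μ ∧ rectDilj jc μ R ⊆ maxGTd (ENNReal.ofReal (1 / (2 * d))) (shD 𝓤)}

/-!
Fix the coordinate `j₀` left out of the product. Sort the rectangles into classes by recording,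
for each `j ≠ j₀`, the scale `n` with `2 ^ n ≤ emb_j(R) < 2 ^ (n + 1)` and the exponent of the
`j`th side length modulo `n + 1`. There are `n + 1` residues for each `n`, so against the weight
`2 ^ (-ε n)` the number of classes is summable, and it is enough to bound `∑ |R|` in one class.

Within a class, a rectangle `R'` longer than `R` in the direction `j` is longer by a factor at
least `2 ^ (n + 1)`. If such `R'` covered more than `1 / d` of `R`, they would cover more than
`1 / d` of the rectangle `P ⊇ R` whose `j`th side is the `(n + 1)`st dyadic ancestor of that of `R`,
hence more than `1 / (2d)` of the double of `P` in the direction `j`; as that double contains the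
dilate of `R` by `2 ^ (n + 1)`, this dilate would lie in `V`. Discarding from `R` what the longer
rectangles cover in the `d - 1` directions `j ≠ j₀` thus leaves at least `|R| / d`, and
incomparability makes the remainders disjoint.
-/

open scoped ENNReal

section Measure

variable {α ι : Type*} [MeasurableSpace α] {μ : Measure α}

lemma tsum_measure_le_mul_measure_iUnion [Countable ι] {A E : ι → Set α} {c : ℝ≥0∞}
    (hEA : ∀ i, E i ⊆ A i) (hE : ∀ i, MeasurableSet (E i))
    (hdisj : Pairwise (Function.onFun Disjoint E)) (hμ : ∀ i, μ (A i) ≤ c * μ (E i)) :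
    ∑' i, μ (A i) ≤ c * μ (⋃ i, A i) :=
  calc ∑' i, μ (A i) ≤ ∑' i, c * μ (E i) := ENNReal.tsum_le_tsum hμ
    _ = c * μ (⋃ i, E i) := by rw [ENNReal.tsum_mul_left, measure_iUnion hdisj hE]
    _ ≤ c * μ (⋃ i, A i) := by gcongr with i; exact hEA i

lemma measure_le_mul_measure_diff_biUnion {J : Finset ι} {A : Set α} {B : ι → Set α}
    (hA : μ A ≠ ∞) (hB : ∀ j ∈ J, μ (A ∩ B j) ≤ (J.card + 1 : ℝ≥0∞)⁻¹ * μ A) :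
    μ A ≤ (J.card + 1) * μ (A \ ⋃ j ∈ J, B j) := by
  have hN0 : (J.card + 1 : ℝ≥0∞) ≠ 0 := by simp
  have hN : (J.card + 1 : ℝ≥0∞) ≠ ∞ := by simp
  have hcover : A ⊆ (A \ ⋃ j ∈ J, B j) ∪ ⋃ j ∈ J, A ∩ B j := by
    rw [← inter_iUnion₂, sdiff_union_inter]
  rw [← ENNReal.inv_mul_le_iff hN0 hN]
  refine ENNReal.le_of_add_le_add_right
    (ENNReal.mul_ne_top (ENNReal.natCast_ne_top J.card)
      (ENNReal.mul_ne_top (ENNReal.inv_ne_top.2 hN0) hA)) ?_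
  calc (J.card + 1 : ℝ≥0∞)⁻¹ * μ A + J.card * ((J.card + 1 : ℝ≥0∞)⁻¹ * μ A)
      = (J.card + 1) * (J.card + 1 : ℝ≥0∞)⁻¹ * μ A := by ring
    _ = μ A := by rw [ENNReal.mul_inv_cancel hN0 hN, one_mul]
    _ ≤ μ (A \ ⋃ j ∈ J, B j) + μ (⋃ j ∈ J, A ∩ B j) :=
      (measure_mono hcover).trans (measure_union_le _ _)
    _ ≤ μ (A \ ⋃ j ∈ J, B j) + ∑ j ∈ J, μ (A ∩ B j) := by
      gcongr; exact measure_biUnion_finset_le _ _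
    _ ≤ μ (A \ ⋃ j ∈ J, B j) + J.card * ((J.card + 1 : ℝ≥0∞)⁻¹ * μ A) := by
      gcongr
      simpa using Finset.sum_le_card_nsmul J _ _ hB

end Measure

section Counting

variable {α ι κ : Type*} [Fintype ι]

lemma tsum_prod_le_prod_tsum (w : κ → ℝ≥0∞) :
    ∑' l : ι → κ, ∏ i, w (l i) ≤ (∑' k, w k) ^ Fintype.card ι := by
  classical
  rw [ENNReal.tsum_eq_iSup_sum]
  refine iSup_le fun s ↦ ?_
  let T : Finset κ := s.biUnion fun l ↦ Finset.univ.image l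
  have hs : s ⊆ Fintype.piFinset fun _ ↦ T := fun l hl ↦ Fintype.mem_piFinset.2 fun i ↦
    Finset.mem_biUnion.2 ⟨l, hl, Finset.mem_image_of_mem l (Finset.mem_univ i)⟩
  calc ∑ l ∈ s, ∏ i, w (l i) ≤ ∑ l ∈ Fintype.piFinset fun _ ↦ T, ∏ i, w (l i) :=
        Finset.sum_le_sum_of_subset hs
    _ = (∑ k ∈ T, w k) ^ Fintype.card ι := by
        rw [← Finset.prod_univ_sum (fun _ : ι ↦ T) fun _ ↦ w, Finset.prod_const, Finset.card_univ]
    _ ≤ (∑' k, w k) ^ Fintype.card ι := by gcongr; exact ENNReal.sum_le_tsum T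

lemma tsum_mul_prod_le_of_tsum_fiber_le {s : Set α} {a : α → ℝ≥0∞} {g : α → ι → κ}
    (w : κ → ℝ≥0∞) {B : ℝ≥0∞} (hB : ∀ l, ∑' x : {x ∈ s | g x = l}, a x ≤ B) :
    ∑' x : s, a x * ∏ i, w (g x i) ≤ (∑' k, w k) ^ Fintype.card ι * B := by
  have hs : s = ⋃ l, {x ∈ s | g x = l} := by ext; simp
  have hdisj : univ.PairwiseDisjoint fun l ↦ {x ∈ s | g x = l} :=
    fun l _ l' _ hne ↦ Set.disjoint_left.2 fun x hx hx' ↦ hne (hx.2.symm.trans hx'.2)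
  calc ∑' x : s, a x * ∏ i, w (g x i)
      = ∑' (l : ι → κ) (x : {x ∈ s | g x = l}), a x * ∏ i, w (g x i) := by
        conv_lhs => rw [hs]
        exact ENNReal.tsum_biUnion (f := fun x ↦ a x * ∏ i, w (g x i)) hdisj
    _ = ∑' l : ι → κ, (∑' x : {x ∈ s | g x = l}, a x) * ∏ i, w (l i) := by
        refine tsum_congr fun l ↦ ?_
        rw [← ENNReal.tsum_mul_right]
        exact tsum_congr fun x ↦ by rw [x.2.2]
    _ ≤ ∑' l : ι → κ, B * ∏ i, w (l i) := by gcongr with l; exact hB l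
    _ = (∑' l : ι → κ, ∏ i, w (l i)) * B := by rw [ENNReal.tsum_mul_left, mul_comm]
    _ ≤ (∑' k, w k) ^ Fintype.card ι * B := by gcongr; exact tsum_prod_le_prod_tsum w

lemma tsum_succ_mul_ofReal_pow {r : ℝ} (hr₀ : 0 ≤ r) (hr₁ : r < 1) :
    ∑' n : ℕ, (n + 1) * ENNReal.ofReal (r ^ n) = ENNReal.ofReal (1 / (1 - r) ^ 2) := by
  have hsum : HasSum (fun n : ℕ ↦ ((n + 1 : ℕ) : ℝ) * r ^ n) (1 / (1 - r) ^ 2) := by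
    simpa using hasSum_choose_mul_geometric_of_norm_lt_one 1
      (show ‖r‖ < 1 by rwa [Real.norm_of_nonneg hr₀])
  rw [← hsum.tsum_eq, ENNReal.ofReal_tsum_of_nonneg (fun n ↦ by positivity) hsum.summable]
  refine tsum_congr fun n ↦ ?_
  rw [ENNReal.ofReal_mul (by positivity), ENNReal.ofReal_natCast, Nat.cast_succ]

lemma tsum_toReal_mul_le {a : α → ℝ≥0∞} {f : α → ℝ} (hf : ∀ x, 0 ≤ f x) {C : ℝ} (hC : 0 ≤ C)
    {b : ℝ≥0∞} (hb : b ≠ ∞)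
    (h : ∑' x, a x * ENNReal.ofReal (f x) ≤ ENNReal.ofReal C * b) :
    ∑' x, (a x).toReal * f x ≤ C * b.toReal := by
  have hCb : ENNReal.ofReal C * b ≠ ∞ := ENNReal.mul_ne_top ENNReal.ofReal_ne_top hb
  have hfin : ∀ x, a x * ENNReal.ofReal (f x) ≠ ∞ := ENNReal.ne_top_of_tsum_ne_top
    (ne_top_of_le_ne_top hCb h)
  calc ∑' x, (a x).toReal * f x = (∑' x, a x * ENNReal.ofReal (f x)).toReal := by
        rw [ENNReal.tsum_toReal_eq hfin]
        exact tsum_congr fun x ↦ by rw [ENNReal.toReal_mul, ENNReal.toReal_ofReal (hf x)]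
    _ ≤ (ENNReal.ofReal C * b).toReal := ENNReal.toReal_mono hCb h
    _ = C * b.toReal := by rw [ENNReal.toReal_mul, ENNReal.toReal_ofReal hC]

lemma tsum_subtype_le_tsum_sep {s : Set α} {p : α → Prop} {f g : α → ℝ≥0∞}
    (hzero : ∀ x ∈ s, ¬ p x → f x = 0) (hle : ∀ x ∈ s, p x → f x ≤ g x) :
    ∑' x : s, f x ≤ ∑' x : {x ∈ s | p x}, g x := by
  rw [tsum_subtype s f, tsum_subtype {x ∈ s | p x} g]
  refine ENNReal.tsum_le_tsum fun x ↦ indicator_apply_le fun hx ↦ ?_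
  by_cases hp : p x
  · simpa only [indicator_of_mem (show x ∈ {x ∈ s | p x} from ⟨hx, hp⟩)] using hle x hx hp
  · simp only [hzero x hx hp, zero_le]

lemma univ_filter_val_lt_sub_one {d : ℕ} (hd : 0 < d) :
    Finset.univ.filter (fun j : Fin d ↦ (j : ℕ) < d - 1)
      = Finset.univ.erase ⟨d - 1, Nat.sub_one_lt_of_lt hd⟩ := by
  ext j
  simp only [Finset.mem_filter, Finset.mem_univ, true_and, Finset.mem_erase, and_true, ne_eq,
    Fin.ext_iff]
  lia

end Counting

section DyadicInterval

lemma mem_dI_iff_floor {p : ℝ} {j k : ℤ} : p ∈ dI j k ↔ ⌊p / 2 ^ k⌋ = j := by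
  rw [Int.floor_eq_iff, le_div_iff₀ (by positivity), div_lt_iff₀ (by positivity)]
  rfl

lemma floor_div_two_zpow_add (p : ℝ) (k : ℤ) (n : ℕ) :
    ⌊p / 2 ^ (k + n : ℤ)⌋ = ⌊p / 2 ^ k⌋ / 2 ^ n := by
  have := Int.floor_div_natCast (p / 2 ^ k) (2 ^ n)
  rw [zpow_add₀ two_ne_zero, zpow_natCast, ← div_div]
  exact_mod_cast this

lemma dI_subset_dI_add (j k : ℤ) (n : ℕ) : dI j k ⊆ dI (j / 2 ^ n) (k + n) := fun p hp ↦ by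
  rw [mem_dI_iff_floor] at hp ⊢
  rw [floor_div_two_zpow_add, hp]

lemma dI_subset_dI_of_mem {j k j' k' : ℤ} {p : ℝ} (hp : p ∈ dI j k) (hp' : p ∈ dI j' k')
    (hk : k ≤ k') : dI j k ⊆ dI j' k' := by
  obtain ⟨n, rfl⟩ := Int.le.dest hk
  have hj' : j / 2 ^ n = j' := by
    rw [← mem_dI_iff_floor.1 (dI_subset_dI_add j k n hp), mem_dI_iff_floor.1 hp']
  exact hj' ▸ dI_subset_dI_add j k n

lemma dI_subset_dilI {μ : ℝ} (hμ : 1 ≤ μ) (j k : ℤ) : dI j k ⊆ dilI μ j k := by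
  have : (2 : ℝ) ^ k ≤ μ * 2 ^ k := le_mul_of_one_le_left (by positivity) hμ
  exact Ico_subset_Ico (by linarith) (by linarith)

lemma dilI_two_pow_subset (j k : ℤ) (n : ℕ) :
    dilI (2 ^ n) j k ⊆ dilI 2 (j / 2 ^ n) (k + n) := by
  have hk : (0 : ℝ) < 2 ^ k := by positivity
  have hlow : ((j / 2 ^ n : ℤ) : ℝ) * 2 ^ n ≤ j := by
    exact_mod_cast Int.ediv_mul_le j (by positivity)
  have hupp : (j : ℝ) + 1 ≤ ((j / 2 ^ n : ℤ) + 1) * 2 ^ n := by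
    exact_mod_cast Int.lt_ediv_add_one_mul_self j (by positivity)
  unfold dilI
  rw [zpow_add₀ two_ne_zero, zpow_natCast]
  exact Ico_subset_Ico (by nlinarith) (by nlinarith)

lemma exists_mapsTo_dI_affine (j k q : ℤ) (n : ℕ) :
    ∃ b : ℝ, MapsTo (fun y ↦ b + 2 ^ n * y) (dI j k) (dI q (k + n)) := by
  refine ⟨(q - j) * (2 ^ k * 2 ^ n), fun y hy ↦ ?_⟩
  have hn : (0 : ℝ) < 2 ^ n := by positivity
  unfold dI at hy ⊢
  rw [zpow_add₀ two_ne_zero, zpow_natCast]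
  constructor <;> nlinarith [hy.1, hy.2]

lemma volume_dI (j k : ℤ) : volume (dI j k) = ENNReal.ofReal (2 ^ k) := by
  rw [dI, Real.volume_Ico]
  ring_nf

lemma volume_dilI (μ : ℝ) (j k : ℤ) : volume (dilI μ j k) = ENNReal.ofReal (μ * 2 ^ k) := by
  rw [dilI, Real.volume_Ico]
  ring_nf

end DyadicInterval

section DyadicRectangle

variable {d : ℕ}

lemma measurableSet_rectD (R : RectD d) : MeasurableSet (rectD R) :=
  .univ_pi fun _ ↦ measurableSet_Ico

lemma measurableSet_shD (𝓖 : Set (RectD d)) : MeasurableSet (shD 𝓖) :=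
  .biUnion 𝓖.to_countable fun R _ ↦ measurableSet_rectD R

lemma volume_rectD (R : RectD d) : volume (rectD R) = ∏ i, ENNReal.ofReal (2 ^ (R i).2) := by
  simp only [rectD, volume_pi_pi, volume_dI]

lemma volume_rectD_ne_top (R : RectD d) : volume (rectD R) ≠ ∞ := by
  rw [volume_rectD]
  exact ENNReal.prod_ne_top fun _ _ ↦ ENNReal.ofReal_ne_top

lemma volume_rectDilj {μ : ℝ} (hμ : 0 ≤ μ) (j : Fin d) (R : RectD d) :
    volume (rectDilj j μ R) = ENNReal.ofReal μ * volume (rectD R) := by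
  have hside : ∀ i, volume (if i = j then dilI μ (R i).1 (R i).2 else dI (R i).1 (R i).2)
      = (if i = j then ENNReal.ofReal μ else 1) * ENNReal.ofReal (2 ^ (R i).2) := fun i ↦ by
    split_ifs
    · rw [volume_dilI, ENNReal.ofReal_mul hμ]
    · rw [volume_dI, one_mul]
  simp only [rectDilj, volume_pi_pi, hside, Finset.prod_mul_distrib, Finset.prod_ite_eq',
    Finset.mem_univ, if_true, volume_rectD]

lemma rectD_subset_rectD_of_mem {R R' : RectD d} {x : Fin d → ℝ} (hx : x ∈ rectD R)
    (hx' : x ∈ rectD R') (hle : ∀ i, (R i).2 ≤ (R' i).2) : rectD R ⊆ rectD R' :=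
  pi_mono fun i hi ↦ dI_subset_dI_of_mem (hx i hi) (hx' i hi) (hle i)

lemma rectD_subset_rectDilj {μ : ℝ} (hμ : 1 ≤ μ) (j : Fin d) (R : RectD d) :
    rectD R ⊆ rectDilj j μ R :=
  pi_mono fun i _ ↦ by
    split_ifs
    exacts [dI_subset_dilI hμ _ _, Subset.rfl]

/-- The rectangle obtained from `R` by replacing its `j`th side by the `n`th dyadic ancestor of that
side. -/
def ancestorj (j : Fin d) (n : ℕ) (R : RectD d) : RectD d :=
  Function.update R j ((R j).1 / 2 ^ n, (R j).2 + n)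

lemma volume_rectD_ancestorj (j : Fin d) (n : ℕ) (R : RectD d) :
    volume (rectD (ancestorj j n R)) = 2 ^ n * volume (rectD R) := by
  have hside : ∀ i, ENNReal.ofReal (2 ^ (ancestorj j n R i).2)
      = (if i = j then 2 ^ n else 1) * ENNReal.ofReal (2 ^ (R i).2) := fun i ↦ by
    rcases eq_or_ne i j with rfl | hij
    · rw [if_pos rfl, ancestorj, Function.update_self, zpow_add₀ two_ne_zero, mul_comm,
        ENNReal.ofReal_mul (by positivity), zpow_natCast, ENNReal.ofReal_pow zero_le_two,
        ENNReal.ofReal_ofNat]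
    · rw [if_neg hij, ancestorj, Function.update_of_ne hij, one_mul]
  simp only [volume_rectD, hside, Finset.prod_mul_distrib, Finset.prod_ite_eq', Finset.mem_univ,
    if_true]

lemma rectDilj_two_pow_subset (j : Fin d) (n : ℕ) (R : RectD d) :
    rectDilj j (2 ^ n) R ⊆ rectDilj j 2 (ancestorj j n R) :=
  pi_mono fun i _ ↦ by
    rcases eq_or_ne i j with rfl | hij
    · simpa only [if_true, ancestorj, Function.update_self] using dilI_two_pow_subset _ _ n
    · simp only [hij, if_false, ancestorj, Function.update_of_ne hij, Subset.rfl]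

lemma volume_image_update_affine (j : Fin d) (b c : ℝ) (A : Set (Fin d → ℝ)) :
    volume ((fun y ↦ Function.update y j (b + c * y j)) '' A) = ENNReal.ofReal |c| * volume A := by
  let v : Fin d → ℝ := Pi.single j b
  let D : (Fin d → ℝ) →ₗ[ℝ] Fin d → ℝ :=
    Matrix.toLin' (Matrix.diagonal (Function.update 1 j c))
  have hdet : LinearMap.det D = c := by
    rw [LinearMap.det_toLin', Matrix.det_diagonal, Finset.prod_update_of_mem (Finset.mem_univ j)]
    simp
  have haffine : (fun y : Fin d → ℝ ↦ Function.update y j (b + c * y j))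
      = fun y ↦ v + D y := by
    funext y i
    rcases eq_or_ne i j with rfl | hij
    · simp [v, D, Matrix.mulVec_diagonal]
    · simp [v, D, Matrix.mulVec_diagonal, hij]
  rw [haffine, ← image_image (v + ·) D A, image_add_left, measure_preimage_add,
    Measure.addHaar_image_linearMap, hdet]

/-- A point of `rectD R` that lies in a member of `𝓖` stays there when its `j`th coordinate moves
freely in the ancestor of the `j`th side; the stretch of that side onto its ancestor multiplies the
volume by `2 ^ n`. -/
lemma two_pow_mul_volume_inter_shD_le {j : Fin d} {n : ℕ} {R : RectD d} {𝓖 : Set (RectD d)}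
    (hlong : ∀ R' ∈ 𝓖, (R j).2 + n ≤ (R' j).2) :
    2 ^ n * volume (rectD R ∩ shD 𝓖) ≤ volume (shD 𝓖 ∩ rectD (ancestorj j n R)) := by
  obtain ⟨b, hb⟩ := exists_mapsTo_dI_affine (R j).1 (R j).2 ((R j).1 / 2 ^ n) n
  have himage : (fun y ↦ Function.update y j (b + 2 ^ n * y j)) '' (rectD R ∩ shD 𝓖)
      ⊆ shD 𝓖 ∩ rectD (ancestorj j n R) := by
    rintro _ ⟨y, ⟨hyR, hy⟩, rfl⟩
    obtain ⟨R', hR', hyR'⟩ := mem_iUnion₂.1 hy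
    have hyj : b + 2 ^ n * y j ∈ dI ((R j).1 / 2 ^ n) ((R j).2 + n) := hb (hyR j trivial)
    have hside : dI ((R j).1 / 2 ^ n) ((R j).2 + n) ⊆ dI (R' j).1 (R' j).2 :=
      dI_subset_dI_of_mem (dI_subset_dI_add _ _ n (hyR j trivial)) (hyR' j trivial) (hlong R' hR')
    refine ⟨mem_iUnion₂.2 ⟨R', hR', (update_mem_pi_iff_of_mem hyR').2 fun _ ↦ hside hyj⟩,
      fun i _ ↦ ?_⟩
    rcases eq_or_ne i j with rfl | hij
    · simpa only [ancestorj, Function.update_self] using hyj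
    · simpa only [ancestorj, Function.update_of_ne hij] using hyR i trivial
  calc 2 ^ n * volume (rectD R ∩ shD 𝓖)
      = volume ((fun y ↦ Function.update y j (b + 2 ^ n * y j)) '' (rectD R ∩ shD 𝓖)) := by
        rw [volume_image_update_affine, abs_of_nonneg (by positivity),
          ENNReal.ofReal_pow zero_le_two, ENNReal.ofReal_ofNat]
    _ ≤ volume (shD 𝓖 ∩ rectD (ancestorj j n R)) := measure_mono himage

end DyadicRectangle

section MaximalFunction

variable {d : ℕ} {t : ℝ≥0∞} {S : Set (Fin d → ℝ)}

lemma mem_maxGTd_of_mem_pi_Ico {u v x : Fin d → ℝ} (hx : x ∈ univ.pi fun i ↦ Ico (u i) (v i))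
    (h : t * volume (univ.pi fun i ↦ Ico (u i) (v i))
      < volume (S ∩ univ.pi fun i ↦ Ico (u i) (v i))) : x ∈ maxGTd t S := by
  have hlim : Filter.Tendsto (fun δ : ℝ ↦ t * volume (univ.pi fun i ↦ Ioo (u i - δ) (v i)))
      (nhds 0) (nhds (t * volume (univ.pi fun i ↦ Ico (u i) (v i)))) := by
    simp only [volume_pi_pi, Real.volume_Ioo, Real.volume_Ico]
    have hpos : ∏ i, ENNReal.ofReal (v i - u i) ≠ 0 := Finset.prod_ne_zero_iff.2 fun i _ ↦ by
      have := (hx i trivial).1.trans_lt (hx i trivial).2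
      simpa using this
    refine ENNReal.Tendsto.const_mul ?_ (.inl hpos)
    refine ENNReal.tendsto_finsetProd_of_ne_top _ (fun i _ ↦ ENNReal.tendsto_ofReal ?_)
      fun i _ ↦ ENNReal.ofReal_ne_top
    exact Continuous.tendsto' (by fun_prop) _ _ (by rw [sub_zero])
  have hev : ∀ᶠ δ in nhdsWithin (0 : ℝ) (Ioi 0),
      t * volume (univ.pi fun i ↦ Ioo (u i - δ) (v i))
        < volume (S ∩ univ.pi fun i ↦ Ico (u i) (v i)) :=
    (hlim.mono_left nhdsWithin_le_nhds).eventually_lt_const h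
  obtain ⟨δ, hlt, hδ⟩ := (hev.and self_mem_nhdsWithin).exists
  have hsub : univ.pi (fun i ↦ Ico (u i) (v i)) ⊆ univ.pi fun i ↦ Ioo (u i - δ) (v i) :=
    pi_mono fun i _ y hy ↦ ⟨(sub_lt_self _ hδ).trans_le hy.1, hy.2⟩
  exact ⟨fun i ↦ u i - δ, v, hsub hx, hlt.trans_le (measure_mono (inter_subset_inter_right S hsub))⟩

lemma rectDilj_subset_maxGTd {j : Fin d} {μ : ℝ} {R : RectD d}
    (h : t * volume (rectDilj j μ R) < volume (S ∩ rectDilj j μ R)) :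
    rectDilj j μ R ⊆ maxGTd t S := by
  have hside : ∀ i, ∃ a b,
      (if i = j then dilI μ (R i).1 (R i).2 else dI (R i).1 (R i).2) = Ico a b := fun i ↦ by
    split_ifs
    exacts [⟨_, _, rfl⟩, ⟨_, _, rfl⟩]
  choose u v huv using hside
  simp only [rectDilj, huv] at h ⊢
  exact fun x hx ↦ mem_maxGTd_of_mem_pi_Ico hx h

lemma volume_inter_shD_le_of_not_rectDilj_subset {j : Fin d} {n : ℕ} {R : RectD d}
    (hn : ¬ rectDilj j (2 ^ n) R ⊆ maxGTd t S) {𝓖 : Set (RectD d)} (h𝓖 : shD 𝓖 ⊆ S)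
    (hlong : ∀ R' ∈ 𝓖, (R j).2 + n ≤ (R' j).2) :
    volume (rectD R ∩ shD 𝓖) ≤ 2 * t * volume (rectD R) := by
  by_contra! hlt
  refine hn ((rectDilj_two_pow_subset j n R).trans (rectDilj_subset_maxGTd ?_))
  calc t * volume (rectDilj j 2 (ancestorj j n R))
      = 2 ^ n * (2 * t * volume (rectD R)) := by
        rw [volume_rectDilj zero_le_two, volume_rectD_ancestorj, ENNReal.ofReal_ofNat]
        ring
    _ < 2 ^ n * volume (rectD R ∩ shD 𝓖) :=
        ENNReal.mul_lt_mul_right (by positivity) (by finiteness) hlt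
    _ ≤ volume (shD 𝓖 ∩ rectD (ancestorj j n R)) := two_pow_mul_volume_inter_shD_le hlong
    _ ≤ volume (S ∩ rectDilj j 2 (ancestorj j n R)) :=
        measure_mono (inter_subset_inter h𝓖 (rectD_subset_rectDilj one_le_two _ _))

end MaximalFunction

section Sparse

variable {d : ℕ}

/-- The rectangles of `𝓖` that are longer than `R` in the direction `j`. -/
def longerIn (𝓖 : Set (RectD d)) (j : Fin d) (R : RectD d) : Set (RectD d) :=
  {R' ∈ 𝓖 | (R j).2 < (R' j).2}

/-- The part of `R` not covered by the rectangles of `𝓖` that are longer than `R` in some direction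
other than `j₀`. -/
def uncovered (𝓖 : Set (RectD d)) (j₀ : Fin d) (R : RectD d) : Set (Fin d → ℝ) :=
  rectD R \ ⋃ j ∈ Finset.univ.erase j₀, shD (longerIn 𝓖 j R)

variable {𝓖 : Set (RectD d)} {j₀ : Fin d} {R R' : RectD d}

lemma length_le_of_mem_uncovered {j : Fin d} {x : Fin d → ℝ} (hx : x ∈ uncovered 𝓖 j₀ R)
    (hR' : R' ∈ 𝓖) (hx' : x ∈ rectD R') (hj : j ≠ j₀) : (R' j).2 ≤ (R j).2 := by
  by_contra! hlt
  exact hx.2 (mem_iUnion₂.2 ⟨j, by simpa using hj, mem_iUnion₂.2 ⟨R', ⟨hR', hlt⟩, hx'⟩⟩)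

lemma disjoint_uncovered (h𝓖 : IsAntichain (fun R R' ↦ rectD R ⊆ rectD R') 𝓖) (hR : R ∈ 𝓖)
    (hR' : R' ∈ 𝓖) (hne : R ≠ R') : Disjoint (uncovered 𝓖 j₀ R) (uncovered 𝓖 j₀ R') := by
  wlog hle : (R j₀).2 ≤ (R' j₀).2 generalizing R R'
  · exact (this hR' hR hne.symm (le_of_not_ge hle)).symm
  refine Set.disjoint_left.2 fun x hx hx' ↦ h𝓖 hR hR' hne ?_
  refine rectD_subset_rectD_of_mem hx.1 hx'.1 fun i ↦ ?_
  rcases eq_or_ne i j₀ with rfl | hi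
  exacts [hle, length_le_of_mem_uncovered hx' hR hx.1 hi]

lemma tsum_volume_le_of_volume_inter_longerIn_le
    (h𝓖 : IsAntichain (fun R R' ↦ rectD R ⊆ rectD R') 𝓖)
    (hsparse : ∀ R ∈ 𝓖, ∀ j ≠ j₀,
      volume (rectD R ∩ shD (longerIn 𝓖 j R)) ≤ (d : ℝ≥0∞)⁻¹ * volume (rectD R)) :
    ∑' R : 𝓖, volume (rectD (R : RectD d)) ≤ d * volume (shD 𝓖) := by
  have hcard : (((Finset.univ.erase j₀).card : ℝ≥0∞) + 1) = d := by
    exact_mod_cast (Finset.card_erase_add_one (Finset.mem_univ j₀)).trans (Finset.card_fin d)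
  rw [shD, biUnion_eq_iUnion]
  refine tsum_measure_le_mul_measure_iUnion (E := fun R : 𝓖 ↦ uncovered 𝓖 j₀ R)
    (fun R ↦ sdiff_subset) (fun R ↦ (measurableSet_rectD _).diff
      (Finset.measurableSet_biUnion _ fun _ _ ↦ measurableSet_shD _))
    (fun R R' hne ↦ disjoint_uncovered h𝓖 R.2 R'.2 (Subtype.coe_ne_coe.2 hne)) fun R ↦ ?_
  rw [← hcard] at hsparse ⊢
  exact measure_le_mul_measure_diff_biUnion (volume_rectD_ne_top _) fun j hj ↦
    hsparse R R.2 j (Finset.ne_of_mem_erase hj)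

end Sparse

section Journe

variable {d : ℕ} {j₀ : Fin d} {S : Set (Fin d → ℝ)} {𝓖 : Set (RectD d)}

/-- The class of a rectangle: the scale `N R j` together with the residue modulo `N R j + 1` of the
exponent of the `j`th side length, for all `j ≠ j₀`. -/
def scaleLabel (j₀ : Fin d) (N : RectD d → Fin d → ℕ) (R : RectD d) :
    {j // j ≠ j₀} → Σ n : ℕ, ZMod (n + 1) :=
  fun j ↦ ⟨N R j, ((R j).2 : ZMod (N R j + 1))⟩

lemma add_le_of_sigma_zmod_eq {n n' : ℕ} {a a' : ℤ}
    (h : (⟨n, a⟩ : Σ n : ℕ, ZMod (n + 1)) = ⟨n', a'⟩) (hlt : a < a') : a + (n + 1 : ℕ) ≤ a' := by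
  obtain ⟨rfl, hmod⟩ := Sigma.mk.inj_iff.1 h
  have hdvd := (ZMod.intCast_eq_intCast_iff_dvd_sub a a' (n + 1)).1 (eq_of_heq hmod)
  have := Int.le_of_dvd (sub_pos.2 hlt) hdvd
  lia

lemma two_mul_ofReal_one_div_two_mul (d : ℕ) [NeZero d] :
    2 * ENNReal.ofReal (1 / (2 * d)) = (d : ℝ≥0∞)⁻¹ := by
  have hd : (0 : ℝ) < d := Nat.cast_pos.2 (NeZero.pos d)
  rw [← ENNReal.ofReal_natCast d, ← ENNReal.ofReal_inv_of_pos hd, ← ENNReal.ofReal_ofNat 2,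
    ← ENNReal.ofReal_mul zero_le_two]
  congr 1
  field_simp

lemma tsum_volume_scaleLabel_fiber_le (h𝓖 : IsAntichain (fun R R' ↦ rectD R ⊆ rectD R') 𝓖)
    (hS : shD 𝓖 ⊆ S) {N : RectD d → Fin d → ℕ}
    (hN : ∀ R ∈ 𝓖, ∀ j ≠ j₀,
      ¬ rectDilj j (2 ^ (N R j + 1)) R ⊆ maxGTd (ENNReal.ofReal (1 / (2 * d))) S)
    (l : {j // j ≠ j₀} → Σ n : ℕ, ZMod (n + 1)) :
    ∑' R : {R ∈ 𝓖 | scaleLabel j₀ N R = l}, volume (rectD (R : RectD d))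
      ≤ d * volume (shD 𝓖) := by
  have : NeZero d := ⟨j₀.pos.ne'⟩
  refine (tsum_volume_le_of_volume_inter_longerIn_le (j₀ := j₀) (h𝓖.subset (sep_subset _ _))
    fun R hR j hj ↦ ?_).trans ?_
  · rw [← two_mul_ofReal_one_div_two_mul]
    refine volume_inter_shD_le_of_not_rectDilj_subset (hN R hR.1 j hj)
      ((biUnion_subset_biUnion_left fun R' hR' ↦ hR'.1.1).trans hS) fun R' hR' ↦ ?_
    exact add_le_of_sigma_zmod_eq (congrFun (hR.2.trans hR'.1.2.symm) ⟨j, hj⟩) hR'.2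
  · gcongr
    exact biUnion_subset_biUnion_left (sep_subset _ _)

theorem tsum_volume_mul_prod_le_of_not_rectDilj_subset
    (h𝓖 : IsAntichain (fun R R' ↦ rectD R ⊆ rectD R') 𝓖) (hS : shD 𝓖 ⊆ S)
    {N : RectD d → Fin d → ℕ}
    (hN : ∀ R ∈ 𝓖, ∀ j ≠ j₀,
      ¬ rectDilj j (2 ^ (N R j + 1)) R ⊆ maxGTd (ENNReal.ofReal (1 / (2 * d))) S)
    (w : ℕ → ℝ≥0∞) :
    ∑' R : 𝓖, volume (rectD (R : RectD d)) * ∏ j ∈ Finset.univ.erase j₀, w (N R j)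
      ≤ (∑' n : ℕ, (n + 1) * w n) ^ (d - 1) * (d * volume (shD 𝓖)) := by
  have hprod : ∀ R, ∏ j ∈ Finset.univ.erase j₀, w (N R j) = ∏ j, w (scaleLabel j₀ N R j).1 :=
    fun R ↦ Finset.prod_subtype _ (by simp) _
  have hsum : ∑' k : Σ n : ℕ, ZMod (n + 1), w k.1 = ∑' n : ℕ, (n + 1) * w n := by
    rw [ENNReal.tsum_sigma']
    refine tsum_congr fun n ↦ ?_
    change ∑' _ : ZMod (n + 1), w n = (n + 1) * w n
    rw [tsum_fintype, Finset.sum_const, Finset.card_univ, ZMod.card, nsmul_eq_mul, Nat.cast_succ]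
  have hcard : Fintype.card {j // j ≠ j₀} = d - 1 := by simp
  simp only [hprod]
  rw [← hsum, ← hcard]
  exact tsum_mul_prod_le_of_tsum_fiber_le (a := fun R ↦ volume (rectD R)) (g := scaleLabel j₀ N)
    (fun k : Σ n : ℕ, ZMod (n + 1) ↦ w k.1) (tsum_volume_scaleLabel_fiber_le h𝓖 hS hN)

end Journe

section Embeddedness

variable {d : ℕ} {𝓤 : Set (RectD d)} {j : Fin d} {R : RectD d}

lemma embj_nonneg (𝓤 : Set (RectD d)) (j : Fin d) (R : RectD d) : 0 ≤ embj 𝓤 j R :=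
  Real.sSup_nonneg fun _ hμ ↦ zero_le_one.trans hμ.1

lemma le_embj (h : embj 𝓤 j R ≠ 0) {μ : ℝ} (hμ : 1 ≤ μ)
    (hsub : rectDilj j μ R ⊆ maxGTd (ENNReal.ofReal (1 / (2 * d))) (shD 𝓤)) : μ ≤ embj 𝓤 j R :=
  le_csSup (by_contra fun hbdd ↦ h (Real.sSup_of_not_bddAbove hbdd)) ⟨hμ, hsub⟩

lemma one_le_embj (h : embj 𝓤 j R ≠ 0) : 1 ≤ embj 𝓤 j R := by
  obtain ⟨μ, hμ, hsub⟩ : {μ : ℝ | 1 ≤ μ ∧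
      rectDilj j μ R ⊆ maxGTd (ENNReal.ofReal (1 / (2 * d))) (shD 𝓤)}.Nonempty := by
    by_contra! hempty
    exact h (by rw [embj, hempty, Real.sSup_empty])
  exact hμ.trans (le_embj h hμ hsub)

/-- The scale of the embeddedness: the integer `n` with `2 ^ n ≤ emb_j(R) < 2 ^ (n + 1)`, provided
that `emb_j(R) ≠ 0`. -/
def embScale (𝓤 : Set (RectD d)) (R : RectD d) (j : Fin d) : ℕ :=
  Nat.log 2 ⌊embj 𝓤 j R⌋₊

lemma two_pow_embScale_le (h : embj 𝓤 j R ≠ 0) : (2 : ℝ) ^ embScale 𝓤 R j ≤ embj 𝓤 j R := by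
  have hfloor : ⌊embj 𝓤 j R⌋₊ ≠ 0 := (Nat.floor_pos.2 (one_le_embj h)).ne'
  have := (Nat.le_floor_iff (embj_nonneg 𝓤 j R)).1 (Nat.pow_log_le_self 2 hfloor)
  exact_mod_cast this

lemma not_rectDilj_two_pow_embScale_succ_subset (h : embj 𝓤 j R ≠ 0) :
    ¬ rectDilj j (2 ^ (embScale 𝓤 R j + 1)) R
      ⊆ maxGTd (ENNReal.ofReal (1 / (2 * d))) (shD 𝓤) := fun hsub ↦ by
  have hlt := (Nat.floor_lt (embj_nonneg 𝓤 j R)).1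
    (Nat.lt_pow_succ_log_self one_lt_two ⌊embj 𝓤 j R⌋₊)
  have hle := le_embj h (one_le_pow₀ one_le_two) hsub
  push_cast at hlt
  exact hle.not_gt hlt

lemma embj_rpow_neg_le {ε : ℝ} (hε : 0 ≤ ε) (h : embj 𝓤 j R ≠ 0) :
    embj 𝓤 j R ^ (-ε) ≤ ((2 : ℝ) ^ (-ε)) ^ embScale 𝓤 R j :=
  calc embj 𝓤 j R ^ (-ε) ≤ ((2 : ℝ) ^ embScale 𝓤 R j) ^ (-ε) :=
        Real.rpow_le_rpow_of_nonpos (by positivity) (two_pow_embScale_le h) (neg_nonpos.2 hε)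
    _ = ((2 : ℝ) ^ (-ε)) ^ embScale 𝓤 R j := by
        rw [← Real.rpow_natCast_mul zero_le_two, ← Real.rpow_mul_natCast zero_le_two, mul_comm]

lemma prod_embj_rpow_neg_eq_zero {ε : ℝ} (hε : ε ≠ 0) {J : Finset (Fin d)}
    (h : ¬ ∀ j ∈ J, embj 𝓤 j R ≠ 0) : ∏ j ∈ J, embj 𝓤 j R ^ (-ε) = 0 := by
  push Not at h
  obtain ⟨j, hj, h₀⟩ := h
  exact Finset.prod_eq_zero hj (by rw [h₀, Real.zero_rpow (neg_ne_zero.2 hε)])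

lemma ofReal_prod_embj_rpow_neg_le {ε : ℝ} (hε : 0 ≤ ε) {J : Finset (Fin d)}
    (h : ∀ j ∈ J, embj 𝓤 j R ≠ 0) :
    ENNReal.ofReal (∏ j ∈ J, embj 𝓤 j R ^ (-ε))
      ≤ ∏ j ∈ J, ENNReal.ofReal (((2 : ℝ) ^ (-ε)) ^ embScale 𝓤 R j) := by
  rw [ENNReal.ofReal_prod_of_nonneg fun j _ ↦ Real.rpow_nonneg (embj_nonneg 𝓤 j R) _]
  gcongr with j hj
  exact embj_rpow_neg_le hε (h j hj)

end Embeddedness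

section Constant

lemma two_rpow_neg_lt_one {ε : ℝ} (hε : 0 < ε) : (2 : ℝ) ^ (-ε) < 1 :=
  Real.rpow_lt_one_of_one_lt_of_neg one_lt_two (neg_lt_zero.2 hε)

/-- The constant of Journé's lemma: the sum of `2 ^ (-ε n)` over all classes of rectangles, times
the constant `d` for a single class. -/
def journeConst (d : ℕ) (ε : ℝ) : ℝ := (1 / (1 - 2 ^ (-ε)) ^ 2) ^ (d - 1) * d

lemma journeConst_pos {d : ℕ} (hd : 0 < d) {ε : ℝ} (hε : 0 < ε) : 0 < journeConst d ε := by
  have := sub_pos.2 (two_rpow_neg_lt_one hε)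
  unfold journeConst
  positivity

lemma ofReal_journeConst {ε : ℝ} (hε : 0 < ε) (d : ℕ) :
    ENNReal.ofReal (journeConst d ε)
      = (∑' n : ℕ, (n + 1) * ENNReal.ofReal (((2 : ℝ) ^ (-ε)) ^ n)) ^ (d - 1) * d := by
  rw [tsum_succ_mul_ofReal_pow (by positivity) (two_rpow_neg_lt_one hε), journeConst,
    ENNReal.ofReal_mul (by positivity), ENNReal.ofReal_pow (by positivity),
    ENNReal.ofReal_natCast]

end Constant

/-- The real supremum encodes an infinite embeddedness as `embj = 0`; the convention
`0 ^ (-ε) = 0 = ∞ ^ (-ε)` gives such rectangles the correct weight. -/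
theorem stmt_18_general {d : ℕ} (j₀ : Fin d) {ε : ℝ} (hε : 0 < ε) {𝓤 𝓤' : Set (RectD d)}
    (hsub : 𝓤' ⊆ 𝓤) (hinc : IsAntichain (fun R R' ↦ rectD R ⊆ rectD R') 𝓤') :
    ∑' R : 𝓤', volume (rectD (R : RectD d)) *
        ENNReal.ofReal (∏ j ∈ Finset.univ.erase j₀, embj 𝓤 j (R : RectD d) ^ (-ε))
      ≤ ENNReal.ofReal (journeConst d ε) * volume (shD 𝓤') := by
  let 𝓖 : Set (RectD d) := {R ∈ 𝓤' | ∀ j ∈ Finset.univ.erase j₀, embj 𝓤 j R ≠ 0}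
  have h𝓖 : 𝓖 ⊆ 𝓤' := sep_subset _ _
  let w : ℕ → ℝ≥0∞ := fun n ↦ ENNReal.ofReal ((2 ^ (-ε)) ^ n)
  let f : RectD d → ℝ≥0∞ := fun R ↦ volume (rectD R) *
    ENNReal.ofReal (∏ j ∈ Finset.univ.erase j₀, embj 𝓤 j R ^ (-ε))
  let g : RectD d → ℝ≥0∞ := fun R ↦ volume (rectD R) *
    ∏ j ∈ Finset.univ.erase j₀, w (embScale 𝓤 R j)
  calc ∑' R : 𝓤', f R ≤ ∑' R : 𝓖, g R := by
        refine tsum_subtype_le_tsum_sep (fun R _ h ↦ ?_) fun R _ h ↦ ?_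
        · simp only [f, prod_embj_rpow_neg_eq_zero hε.ne' h, ENNReal.ofReal_zero, mul_zero]
        · dsimp only [f, g]
          gcongr
          exact ofReal_prod_embj_rpow_neg_le hε.le h
    _ ≤ (∑' n : ℕ, (n + 1) * w n) ^ (d - 1) * (d * volume (shD 𝓖)) :=
        tsum_volume_mul_prod_le_of_not_rectDilj_subset (hinc.subset h𝓖)
          (biUnion_subset_biUnion_left (h𝓖.trans hsub))
          (fun R hR j hj ↦ not_rectDilj_two_pow_embScale_succ_subset (hR.2 j (by simpa using hj))) w
    _ ≤ ENNReal.ofReal (journeConst d ε) * volume (shD 𝓤') := by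
        rw [ofReal_journeConst hε, mul_assoc]
        gcongr
        exact biUnion_subset_biUnion_left h𝓖

/-- Journé's Lemma in higher parameters, with rectangles: for `d ≥ 2` and
`0 < ε < 1` there is `C_{d,ε}` such that for every collection `𝓤` of pairwise incomparable
dyadic rectangles in `ℝ^d` with shadow of finite measure and every `𝓤' ⊆ 𝓤`,
`∑_{R ∈ 𝓤'} |R| ∏_{j=1}^{d-1} emb_j(R)^{-ε} ≤ C_{d,ε} |sh 𝓤'|`. -/
theorem stmt_18 (d : ℕ) (hd : 2 ≤ d) (ε : ℝ) (hε : 0 < ε) (hε1 : ε < 1) :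
    ∃ C : ℝ, 0 < C ∧ ∀ 𝓤 : Set (RectD d), volume (shD 𝓤) < ⊤ →
      (∀ R ∈ 𝓤, ∀ R' ∈ 𝓤, R ≠ R' → ¬ rectD R ⊆ rectD R') →
      ∀ 𝓤' ⊆ 𝓤,
      ∑' R : 𝓤', (volume (rectD (R : RectD d))).toReal *
          ∏ j ∈ Finset.univ.filter (fun j : Fin d => (j : ℕ) < d - 1),
            embj 𝓤 j (R : RectD d) ^ (-ε)
        ≤ C * (volume (shD 𝓤')).toReal := by
  have hd₀ : 0 < d := by lia
  refine ⟨journeConst d ε, journeConst_pos hd₀ hε, fun 𝓤 hfin hinc 𝓤' hsub ↦ ?_⟩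
  have hfin' := ((measure_mono (biUnion_subset_biUnion_left hsub)).trans_lt hfin).ne
  rw [univ_filter_val_lt_sub_one hd₀]
  exact tsum_toReal_mul_le (fun R : 𝓤' ↦ Finset.prod_nonneg fun j _ ↦
      Real.rpow_nonneg (embj_nonneg 𝓤 j R) _) (journeConst_pos hd₀ hε).le hfin'
    (stmt_18_general _ hε hsub fun R hR R' hR' ↦ hinc R (hsub hR) R' (hsub hR'))
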